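/- Let X ~ Binomial(n, π) with n ≥ 1 and π ∈ (0,1), let π̂ = X/n and θ = π(1−π). Then E[π̂⁴] = π⁴ + 6π²θ/n + 4π(1−2π)θ/n² + 3θ²/n² + (1−6θ)θ/n³, and E[π̂⁴] ≤ 28·max{π⁴, π/n³}. Consequently, there exists a universal constant C' > 0 (not depending on n or π) such that E[(π̂(1 − π̂))⁴] ≤ C'·max{θ⁴, θ/n³}. -/

import Mathlib

noncomputable section

/-- `X` has the `Binomial(n, p)` distribution under the measure `μ`. -/
def IsBinomial {Ω : Type*} [MeasurableSpace Ω] (μ : MeasureTheory.Measure Ω) (X : Ω → ℕ)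
    (n : ℕ) (p : ℝ) : Prop :=
  ∀ m : ℕ, (μ {ω | X ω = m}).toReal = (n.choose m : ℝ) * p ^ m * (1 - p) ^ (n - m)

open MeasureTheory ProbabilityTheory


def bS (p q : ℝ) (n : ℕ) (g : ℕ → ℝ) : ℝ :=
  ∑ m ∈ Finset.range (n + 1), g m * ((n.choose m : ℝ) * p ^ m * q ^ (n - m))

lemma bS_one {p q : ℝ} (h : p + q = 1) (n : ℕ) : bS p q n (fun _ => 1) = 1 := by
  unfold bS
  have := add_pow p q n
  rw [h, one_pow] at this
  refine Eq.trans ?_ this.symm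
  refine Finset.sum_congr rfl fun m _ => by ring

lemma bS_succ (p q : ℝ) (n : ℕ) (g : ℕ → ℝ) :
    bS p q (n + 1) (fun m => m * g m) = (n + 1) * p * bS p q n (fun m => g (m + 1)) := by
  unfold bS
  rw [Finset.sum_range_succ']
  simp only [Nat.cast_zero, zero_mul, add_zero]
  rw [Finset.mul_sum]
  refine Finset.sum_congr rfl fun m _ => ?_
  have h : ((n : ℝ) + 1) * (n.choose m : ℝ) = ((n + 1).choose (m + 1) : ℝ) * ((m : ℝ) + 1) := by
    exact_mod_cast Nat.add_one_mul_choose_eq n m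
  have e : n + 1 - (m + 1) = n - m := by omega
  rw [e, pow_succ]
  push_cast
  linear_combination (-(g (m + 1) * p ^ m * p * q ^ (n - m))) * h

lemma bS_add (p q : ℝ) (n : ℕ) (f g : ℕ → ℝ) :
    bS p q n (fun m => f m + g m) = bS p q n f + bS p q n g := by
  unfold bS
  rw [← Finset.sum_add_distrib]
  exact Finset.sum_congr rfl fun m _ => by ring

lemma bS_mul (p q : ℝ) (n : ℕ) (c : ℝ) (f : ℕ → ℝ) :
    bS p q n (fun m => c * f m) = c * bS p q n f := by
  unfold bS
  rw [Finset.mul_sum]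
  exact Finset.sum_congr rfl fun m _ => by ring

lemma bS_m1 {p q : ℝ} (h : p + q = 1) (n : ℕ) : bS p q n (fun m => (m : ℝ)) = n * p := by
  cases n with
  | zero => simp [bS]
  | succ n =>
    have := bS_succ p q n (fun _ => 1)
    simp only [mul_one, bS_one h] at this
    rw [this]; push_cast; ring

lemma bS_m2 {p q : ℝ} (h : p + q = 1) (n : ℕ) :
    bS p q n (fun m => (m : ℝ) ^ 2) = n * p + n * (n - 1) * p ^ 2 := by
  cases n with
  | zero => simp [bS]
  | succ n =>
    have := bS_succ p q n (fun m => (m : ℝ))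
    have e : (fun m : ℕ => (m : ℝ) ^ 2) = fun m : ℕ => (m : ℝ) * m := by funext m; ring
    have e2 : (fun m : ℕ => ((m + 1 : ℕ) : ℝ)) = fun m : ℕ => (m : ℝ) + 1 := by
      funext m; push_cast; ring
    rw [e, this, e2, bS_add, bS_m1 h, bS_one h]
    push_cast; ring

lemma bS_m3 {p q : ℝ} (h : p + q = 1) (n : ℕ) :
    bS p q n (fun m => (m : ℝ) ^ 3)
      = n * p + 3 * n * (n - 1) * p ^ 2 + n * (n - 1) * (n - 2) * p ^ 3 := by
  cases n with
  | zero => simp [bS]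
  | succ n =>
    have := bS_succ p q n (fun m => (m : ℝ) ^ 2)
    have e : (fun m : ℕ => (m : ℝ) ^ 3) = fun m : ℕ => (m : ℝ) * (m : ℝ) ^ 2 := by
      funext m; ring
    have e2 : (fun m : ℕ => ((m + 1 : ℕ) : ℝ) ^ 2)
        = fun m : ℕ => (m : ℝ) ^ 2 + (2 * (m : ℝ) + 1) := by
      funext m; push_cast; ring
    rw [e, this, e2, bS_add, bS_add, bS_mul, bS_m1 h, bS_m2 h, bS_one h]
    push_cast; ring

lemma bS_m4 {p q : ℝ} (h : p + q = 1) (n : ℕ) :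
    bS p q n (fun m => (m : ℝ) ^ 4)
      = n * p + 7 * n * (n - 1) * p ^ 2 + 6 * n * (n - 1) * (n - 2) * p ^ 3
        + n * (n - 1) * (n - 2) * (n - 3) * p ^ 4 := by
  cases n with
  | zero => simp [bS]
  | succ n =>
    have := bS_succ p q n (fun m => (m : ℝ) ^ 3)
    have e : (fun m : ℕ => (m : ℝ) ^ 4) = fun m : ℕ => (m : ℝ) * (m : ℝ) ^ 3 := by
      funext m; ring
    have e2 : (fun m : ℕ => ((m + 1 : ℕ) : ℝ) ^ 3)
        = fun m : ℕ => (m : ℝ) ^ 3 + (3 * (m : ℝ) ^ 2 + (3 * (m : ℝ) + 1)) := by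
      funext m; push_cast; ring
    rw [e, this, e2, bS_add, bS_add, bS_add, bS_mul, bS_mul, bS_m1 h, bS_m2 h, bS_m3 h, bS_one h]
    push_cast; ring

lemma bS_refl (p q : ℝ) (n : ℕ) (g : ℕ → ℝ) :
    bS p q n g = bS q p n (fun m => g (n - m)) := by
  unfold bS
  rw [← Finset.sum_range_reflect]
  refine Finset.sum_congr rfl fun m hm => ?_
  have hm' : m ≤ n := by have := Finset.mem_range.1 hm; omega
  have e : n + 1 - 1 - m = n - m := by omega
  have e2 : n - (n - m) = m := by omega
  rw [e, e2, Nat.choose_symm hm']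
  ring

lemma bS_mono {p q : ℝ} (hp : 0 ≤ p) (hq : 0 ≤ q) (n : ℕ) {f g : ℕ → ℝ}
    (h : ∀ m ≤ n, f m ≤ g m) : bS p q n f ≤ bS p q n g := by
  unfold bS
  refine Finset.sum_le_sum fun m hm => ?_
  have hm' : m ≤ n := by have := Finset.mem_range.1 hm; omega
  exact mul_le_mul_of_nonneg_right (h m hm') (by positivity)

lemma bS_hat {p q : ℝ} (h : p + q = 1) (n : ℕ) (hn : 1 ≤ n) :
    bS p q n (fun m => ((m : ℝ) / n) ^ 4)
      = p ^ 4 + 6 * p ^ 2 * (p * (1 - p)) / (n : ℝ)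
        + 4 * p * (1 - 2 * p) * (p * (1 - p)) / (n : ℝ) ^ 2
        + 3 * (p * (1 - p)) ^ 2 / (n : ℝ) ^ 2
        + (1 - 6 * (p * (1 - p))) * (p * (1 - p)) / (n : ℝ) ^ 3 := by
  have e : (fun m : ℕ => ((m : ℝ) / n) ^ 4) = fun m : ℕ => (1 / (n : ℝ) ^ 4) * (m : ℝ) ^ 4 := by
    funext m; ring
  have : (n : ℝ) ≠ 0 := by positivity
  rw [e, bS_mul, bS_m4 h]
  field_simp
  ring

lemma bS_bound {p q : ℝ} (hp : 0 ≤ p) (hq : 0 ≤ q) (h : p + q = 1) (n : ℕ) (hn : 1 ≤ n) :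
    bS p q n (fun m => ((m : ℝ) / n) ^ 4) ≤ 15 * max (p ^ 4) (p / (n : ℝ) ^ 3) := by
  have hn' : (1 : ℝ) ≤ n := by exact_mod_cast hn
  have hn0 : (n : ℝ) ≠ 0 := by positivity
  obtain ⟨b, hb⟩ : ∃ b : ℝ, b = 1 / n := ⟨_, rfl⟩
  have hb0 : 0 ≤ b := by rw [hb]; positivity
  have hb1 : b ≤ 1 := by rw [hb]; exact (div_le_one (by positivity)).2 hn'
  have e1 : p / (n : ℝ) ^ 3 = p * b ^ 3 := by rw [hb]; field_simp
  have e2 : bS p q n (fun m => ((m : ℝ) / n) ^ 4)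
      = p * b ^ 3 + 7 * (1 - b) * p ^ 2 * b ^ 2 + 6 * (1 - b) * (1 - 2 * b) * p ^ 3 * b
        + (1 - b) * (1 - 2 * b) * (1 - 3 * b) * p ^ 4 := by
    rw [bS_hat h n hn, hb]; field_simp; ring
  have k1 : (1 - b) * (1 - 2 * b) ≤ 1 := by nlinarith
  have k2 : (1 - b) * (1 - 2 * b) * (1 - 3 * b) ≤ 1 := by nlinarith [mul_nonneg hb0 hb0, mul_nonneg hb0 (sq_nonneg (b-1)), mul_nonneg hb0 (sq_nonneg (2*b-1))]
  have key : bS p q n (fun m => ((m : ℝ) / n) ^ 4)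
      ≤ p * b ^ 3 + 7 * (p ^ 2 * b ^ 2) + 6 * (p ^ 3 * b) + p ^ 4 := by
    rw [e2]
    have a1 : (1 - b) * (p ^ 2 * b ^ 2) ≤ 1 * (p ^ 2 * b ^ 2) :=
      mul_le_mul_of_nonneg_right (by linarith) (by positivity)
    have a2 := mul_le_mul_of_nonneg_right k1 (show 0 ≤ p ^ 3 * b by positivity)
    have a3 := mul_le_mul_of_nonneg_right k2 (show 0 ≤ p ^ 4 by positivity)
    nlinarith
  rw [e1]
  refine key.trans ?_
  rcases le_total p b with hpb | hpb
  · have := le_max_right (p ^ 4) (p * b ^ 3)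
    have c1 : p ^ 2 * b ^ 2 ≤ p * b ^ 3 := by
      have := mul_le_mul_of_nonneg_left hpb (show 0 ≤ p * b ^ 2 by positivity); nlinarith
    have c2 : p ^ 3 * b ≤ p ^ 2 * b ^ 2 := by
      have := mul_le_mul_of_nonneg_left hpb (show 0 ≤ p ^ 2 * b by positivity); nlinarith
    have c3 : p ^ 4 ≤ p ^ 3 * b := by
      have := mul_le_mul_of_nonneg_left hpb (show 0 ≤ p ^ 3 by positivity); nlinarith
    linarith
  · have := le_max_left (p ^ 4) (p * b ^ 3)
    have c1 : p * b ^ 3 ≤ p ^ 2 * b ^ 2 := by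
      have := mul_le_mul_of_nonneg_left hpb (show 0 ≤ p * b ^ 2 by positivity); nlinarith
    have c2 : p ^ 2 * b ^ 2 ≤ p ^ 3 * b := by
      have := mul_le_mul_of_nonneg_left hpb (show 0 ≤ p ^ 2 * b by positivity); nlinarith
    have c3 : p ^ 3 * b ≤ p ^ 4 := by
      have := mul_le_mul_of_nonneg_left hpb (show 0 ≤ p ^ 3 by positivity); nlinarith
    linarith

lemma bS_half {p q : ℝ} (hp : 0 ≤ p) (hq : 1 / 2 ≤ q) (h : p + q = 1) (n : ℕ) (hn : 1 ≤ n) :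
    bS p q n (fun m => (((m : ℝ) / n) * (1 - (m : ℝ) / n)) ^ 4)
      ≤ 240 * max ((p * q) ^ 4) ((p * q) / (n : ℝ) ^ 3) := by
  have hn' : (0 : ℝ) < n := by exact_mod_cast hn
  have s1 : bS p q n (fun m => (((m : ℝ) / n) * (1 - (m : ℝ) / n)) ^ 4)
      ≤ bS p q n (fun m => ((m : ℝ) / n) ^ 4) := by
    refine bS_mono hp (by linarith) n fun m hm => ?_
    have h0 : 0 ≤ (m : ℝ) / n := by positivity
    have h1 : (m : ℝ) / n ≤ 1 := (div_le_one hn').2 (by exact_mod_cast hm)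
    have h2 : 0 ≤ 1 - (m : ℝ) / n := by linarith
    exact pow_le_pow_left₀ (mul_nonneg h0 h2) (mul_le_of_le_one_right h0 (by linarith)) 4
  refine (s1.trans (bS_bound hp (by linarith) h n hn)).trans ?_
  have hpq : p / 2 ≤ p * q := by nlinarith
  have t1 : p ^ 4 ≤ 16 * (p * q) ^ 4 := by
    have := pow_le_pow_left₀ (by positivity) hpq 4
    nlinarith
  have t2 : p / (n : ℝ) ^ 3 ≤ 16 * ((p * q) / (n : ℝ) ^ 3) := by
    have : p / (n : ℝ) ^ 3 ≤ (16 * (p * q)) / (n : ℝ) ^ 3 := by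
      gcongr; nlinarith
    rwa [mul_div_assoc] at this
  have t3 : max (p ^ 4) (p / (n : ℝ) ^ 3) ≤ 16 * max ((p * q) ^ 4) ((p * q) / (n : ℝ) ^ 3) :=
    max_le (t1.trans (by gcongr; exact le_max_left _ _))
      (t2.trans (by gcongr; exact le_max_right _ _))
  linarith

lemma integral_bin {Ω : Type*} [MeasurableSpace Ω] (μ : Measure Ω) [IsProbabilityMeasure μ]
    (n : ℕ) (p : ℝ) (X : Ω → ℕ) (hmeas : Measurable X) (hbin : IsBinomial μ X n p) (g : ℕ → ℝ) :
    ∫ ω, g (X ω) ∂μ = bS p (1 - p) n g := by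
  have hms : ∀ m, MeasurableSet {ω | X ω = m} := fun m => hmeas (measurableSet_singleton m)
  have hae : ∀ᵐ ω ∂μ, X ω ≤ n := by
    have : ∀ m : ℕ, ∀ᵐ ω ∂μ, n < m → X ω ≠ m := by
      intro m
      by_cases hm : n < m
      · have h := hbin m
        rw [Nat.choose_eq_zero_of_lt hm] at h
        simp only [Nat.cast_zero, zero_mul] at h
        have h0 : μ {ω | X ω = m} = 0 :=
          ((ENNReal.toReal_eq_zero_iff _).1 h).resolve_right (measure_ne_top _ _)
        rw [ae_iff]
        simpa [hm] using h0
      · exact Filter.Eventually.of_forall fun ω h => absurd h hm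
    filter_upwards [ae_all_iff.2 this] with ω h
    by_contra hc
    exact h (X ω) (by omega) rfl
  have heq : (fun ω => g (X ω)) =ᵐ[μ] fun ω => ∑ m ∈ Finset.range (n + 1),
      ({ω | X ω = m} : Set Ω).indicator (fun _ => g m) ω := by
    filter_upwards [hae] with ω h
    simp only [Set.indicator_apply, Set.mem_setOf_eq]
    rw [Finset.sum_ite_eq, if_pos (Finset.mem_range.2 (by omega))]
  rw [integral_congr_ae heq, integral_finset_sum]
  · unfold bS
    refine Finset.sum_congr rfl fun m _ => ?_
    rw [integral_indicator_const _ (hms m), ← hbin m, smul_eq_mul, mul_comm]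
    rfl
  · intro m _
    exact (integrable_const _).indicator (hms m)

/-- exact formula for `E[π̂⁴]`, the bound `E[π̂⁴] ≤ 28·max{π⁴, π/n³}`, and
a universal constant `C' > 0` with `E[(π̂(1−π̂))⁴] ≤ C'·max{θ⁴, θ/n³}`. -/
theorem stmt_18 {Ω : Type*} [MeasurableSpace Ω] (μ : Measure Ω) [IsProbabilityMeasure μ]
    (n : ℕ) (hn : 1 ≤ n) (p : ℝ) (hp : p ∈ Set.Ioo (0 : ℝ) 1)
    (X : Ω → ℕ) (hmeas : Measurable X) (hbin : IsBinomial μ X n p) :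
    (∫ ω, ((X ω : ℝ) / n) ^ 4 ∂μ)
      = p ^ 4 + 6 * p ^ 2 * (p * (1 - p)) / (n : ℝ)
        + 4 * p * (1 - 2 * p) * (p * (1 - p)) / (n : ℝ) ^ 2
        + 3 * (p * (1 - p)) ^ 2 / (n : ℝ) ^ 2
        + (1 - 6 * (p * (1 - p))) * (p * (1 - p)) / (n : ℝ) ^ 3 ∧
    (∫ ω, ((X ω : ℝ) / n) ^ 4 ∂μ) ≤ 28 * max (p ^ 4) (p / (n : ℝ) ^ 3) ∧
    (∃ C' : ℝ, 0 < C' ∧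
      ∀ (Ω' : Type) (mΩ' : MeasurableSpace Ω') (μ' : Measure Ω'),
        IsProbabilityMeasure μ' →
        ∀ (n' : ℕ), 1 ≤ n' → ∀ (p' : ℝ), p' ∈ Set.Ioo (0 : ℝ) 1 →
        ∀ (X' : Ω' → ℕ), Measurable X' → IsBinomial μ' X' n' p' →
          (∫ ω, (((X' ω : ℝ) / n') * (1 - (X' ω : ℝ) / n')) ^ 4 ∂μ')
            ≤ C' * max ((p' * (1 - p')) ^ 4) ((p' * (1 - p')) / (n' : ℝ) ^ 3)) := by
  have e1 := integral_bin μ n p X hmeas hbin (fun m => ((m : ℝ) / n) ^ 4)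
  have hq : 0 ≤ 1 - p := by linarith [hp.2]
  have hs : p + (1 - p) = 1 := by ring
  refine ⟨?_, ?_, 240, by norm_num, ?_⟩
  · rw [e1, bS_hat hs n hn]
  · rw [e1]
    refine (bS_bound hp.1.le hq hs n hn).trans ?_
    have : 0 ≤ max (p ^ 4) (p / (n : ℝ) ^ 3) := le_max_of_le_left (by have := hp.1; positivity)
    linarith
  · intro Ω' mΩ' μ' hμ' k hk r hr Y hY hYb
    rw [integral_bin μ' k r Y hY hYb (fun m => (((m : ℝ) / k) * (1 - (m : ℝ) / k)) ^ 4)]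
    have hk0 : (k : ℝ) ≠ 0 := by positivity
    rcases le_total r (1 / 2) with h | h
    · exact bS_half hr.1.le (by linarith) (by ring) k hk
    · rw [bS_refl]
      have := bS_half (p := 1 - r) (q := r) (by linarith [hr.2]) h (by ring) k hk
      rw [mul_comm (1 - r) r] at this
      refine le_trans (bS_mono (by linarith [hr.2]) hr.1.le k fun m hm => le_of_eq ?_) this
      rw [Nat.cast_sub hm, sub_div, div_self hk0]
      ring
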